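/- Let R be the quotient of ℂ⟨e1,e2,e3⟩ by the two-sided ideal generated by e1e2 + e2e1, e1e3 + e3e1, e2e3 − e3e2 − e1, e2², and e3². Then h_0 = 1 and h_n = 2 for every n ≥ 1; equivalently, the Poincaré series Σ_{n≥0} h_n z^n equals (1+z)/(1−z). -/

import Mathlib

open CategoryTheory FreeAlgebra

/-- `Ext^m_R(ℂ,ℂ)` as a ℂ-module, where `ℂ` is an `R`-module via the augmentation `ε`. -/
noncomputable def extC (R : Type) [Ring R] [Algebra ℂ R] (ε : R →ₐ[ℂ] ℂ) (m : ℕ) :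
    ModuleCat ℂ :=
  letI : Module R ℂ := Module.compHom ℂ ε.toRingHom
  ((Ext ℂ (ModuleCat R) m).obj (Opposite.op (ModuleCat.of R ℂ))).obj (ModuleCat.of R ℂ)

/-- `h_m = dim_ℂ Ext^m_R(ℂ,ℂ)`. -/
noncomputable def extDim (R : Type) [Ring R] [Algebra ℂ R] (ε : R →ₐ[ℂ] ℂ) (m : ℕ) : ℕ :=
  Module.finrank ℂ (extC R ε m)

/-- Relations: `e1e2 + e2e1 = 0`, `e1e3 + e3e1 = 0`, `e2e3 - e3e2 = e1`, `e2² = 0`, `e3² = 0`. -/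
inductive CRel : FreeAlgebra ℂ (Fin 3) → FreeAlgebra ℂ (Fin 3) → Prop
  | r12 : CRel (ι ℂ 0 * ι ℂ 1 + ι ℂ 1 * ι ℂ 0) 0
  | r13 : CRel (ι ℂ 0 * ι ℂ 2 + ι ℂ 2 * ι ℂ 0) 0
  | r23 : CRel (ι ℂ 1 * ι ℂ 2 - ι ℂ 2 * ι ℂ 1) (ι ℂ 0)
  | r22 : CRel (ι ℂ 1 * ι ℂ 1) 0
  | r33 : CRel (ι ℂ 2 * ι ℂ 2) 0

/-!
The relations say that `R` is the free product of the two algebras of dual numbers `ℂ[e2] / (e2²)`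
and `ℂ[e3] / (e3²)`: the commutator `e1 = [e2, e3]` anticommutes with `e2` and `e3` automatically.
More generally, let `R` be freely generated by square-zero elements `x i`, for `i` in `I`. If `M` is
an `R`-module and `e i ∈ M` satisfies `x i • e i = 0`, then letting `x i` act on `K × M` by
`(c, m) ↦ (0, c • e i + x i • m)` defines a representation of `R`, so `∑ i, a i * x i = 0` implies
`∑ i, a i • e i = 0`. With `M = R / R x i` this shows `a i ∈ R x i`. Hence
`⋯ → R^I → R^I → R → K`, with all differentials given by right multiplication by the `x i`, is a
free resolution of `K`. The `x i` act by zero on `K`, so all differentials of `Hom(-, K)` vanish and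
the Betti numbers are the ranks of the free modules in the resolution.
-/

universe u

section HomologicalAlgebra

variable {C : Type*} [Category* C] [Abelian C]

lemma quasiIso_toSingle₀Equiv_symm (L : ChainComplex C ℕ) {X : C} (φ : L.X 0 ⟶ X)
    (hepi : Epi φ) (hφ : L.d 1 0 ≫ φ = 0) (exact_zero : (ShortComplex.mk _ _ hφ).Exact)
    (exact_succ : ∀ n, (L.sc' (n + 2) (n + 1) n).Exact) :
    QuasiIso ((L.toSingle₀Equiv X).symm ⟨φ, hφ⟩) where
  quasiIsoAt n := by
    cases n with
    | zero =>
      rw [ChainComplex.quasiIsoAt₀_iff,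
        ShortComplex.quasiIso_iff_of_zeros' _ (L.shape _ _ (by simp)) rfl rfl]
      have f_zero_eq : ((L.toSingle₀Equiv X).symm ⟨φ, hφ⟩).f 0 = φ :=
        ChainComplex.toSingle₀Equiv_symm_apply_f_zero φ hφ
      constructor
      · convert! exact_zero
      · convert! hepi
    | succ n =>
      rw [quasiIsoAt_iff_exactAt' (hL := ChainComplex.exactAt_succ_single_obj ..),
        L.exactAt_iff' (n + 2) (n + 1) n (by simp) (by simp)]
      exact exact_succ n

/-- The Ext modules computed by a resolution `P` of `X` that is minimal with respect to `Y`, in the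
sense that all differentials of `Hom(P, Y)` vanish. -/
noncomputable def extIsoHomOfMinimal {K : Type*} [Ring K] [Linear K C] [EnoughProjectives C]
    {X Y : C} (P : ProjectiveResolution X)
    (hP : ∀ n (f : P.complex.X n ⟶ Y), P.complex.d (n + 1) n ≫ f = 0) (n : ℕ) :
    ((Ext K C n).obj (Opposite.op X)).obj Y ≅ ModuleCat.of K (P.complex.X n ⟶ Y) :=
  let L := P.complex.linearYonedaObj K Y
  have hd (i j : ℕ) : L.d i j = 0 := by
    by_cases hij : i + 1 = j
    · subst hij
      ext f
      exact hP i f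
    · exact L.shape i j hij
  P.isoExt n Y ≪≫ (L.isoHomologyπ _ n rfl (hd _ _)).symm ≪≫ L.iCyclesIso n _ rfl (hd _ _)

end HomologicalAlgebra

section ModuleResolution

variable {R : Type u} [Ring R] {F : ℕ → Type u} [∀ n, AddCommGroup (F n)] [∀ n, Module R (F n)]
  (d : ∀ n, F (n + 1) →ₗ[R] F n)

/-- The chain complex `⋯ → F 2 → F 1 → F 0` of modules with the given differentials. -/
noncomputable def moduleComplex (hd : ∀ n, d n ∘ₗ d (n + 1) = 0) :
    ChainComplex (ModuleCat.{u} R) ℕ :=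
  ChainComplex.of (fun n => ModuleCat.of R (F n)) (fun n => ModuleCat.ofHom (d n)) fun n => by
    rw [← ModuleCat.ofHom_comp, hd, ModuleCat.ofHom_zero]

lemma moduleComplex_d (hd : ∀ n, d n ∘ₗ d (n + 1) = 0) (n : ℕ) :
    (moduleComplex d hd).d (n + 1) n = ModuleCat.ofHom (d n) :=
  ChainComplex.of_d (fun n => ModuleCat.of R (F n)) (fun n => ModuleCat.ofHom (d n)) n

lemma moduleComplex_d_comp_ofHom (hd : ∀ n, d n ∘ₗ d (n + 1) = 0) {n : ℕ} {M : Type u}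
    [AddCommGroup M] [Module R M] (f : F n →ₗ[R] M) :
    (moduleComplex d hd).d (n + 1) n ≫ ModuleCat.ofHom f = ModuleCat.ofHom (f ∘ₗ d n) :=
  congrArg (· ≫ ModuleCat.ofHom f) (moduleComplex_d d hd n)

/-- The projective resolution given by an exact sequence `⋯ → F 1 → F 0 → M → 0` of modules in
which all `F n` are projective. -/
noncomputable def projectiveResolutionOfExact [∀ n, Module.Projective R (F n)]
    {M : Type u} [AddCommGroup M] [Module R M] (π : F 0 →ₗ[R] M)
    (exact_succ : ∀ n, Function.Exact (d (n + 1)) (d n))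
    (exact_zero : Function.Exact (d 0) π) (hπ : Function.Surjective π) :
    ProjectiveResolution (ModuleCat.of R M) :=
  have hd (n : ℕ) : d n ∘ₗ d (n + 1) = 0 := (exact_succ n).linearMap_comp_eq_zero
  have d_comp_π : (moduleComplex d hd).d 1 0 ≫ ModuleCat.ofHom π = 0 := by
    rw [moduleComplex_d_comp_ofHom, exact_zero.linearMap_comp_eq_zero, ModuleCat.ofHom_zero]
    rfl
  { complex := moduleComplex d hd
    projective n := (IsProjective.iff_projective (F n)).mp inferInstance
    π := (ChainComplex.toSingle₀Equiv _ _).symm ⟨ModuleCat.ofHom π, d_comp_π⟩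
    quasiIso := by
      refine quasiIso_toSingle₀Equiv_symm _ _ ((ModuleCat.epi_iff_surjective _).mpr hπ) d_comp_π
        ?_ fun n => ?_
      · rw [ShortComplex.ShortExact.moduleCat_exact_iff_function_exact]
        simpa only [moduleComplex_d] using! exact_zero
      · rw [ShortComplex.ShortExact.moduleCat_exact_iff_function_exact]
        simpa only [HomologicalComplex.shortComplexFunctor'_obj_f,
          HomologicalComplex.shortComplexFunctor'_obj_g, moduleComplex_d] using! exact_succ n }

end ModuleResolution

section Augmentation

variable {K R : Type u} [Field K] [Ring R] [Algebra K R]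

/-- The ground field as a module over an augmented algebra, with action `r • c = ε r * c`. -/
def TrivialModule (_ε : R →ₐ[K] K) : Type u := K

namespace TrivialModule

variable (ε : R →ₐ[K] K)

noncomputable instance : AddCommGroup (TrivialModule ε) := inferInstanceAs (AddCommGroup K)

noncomputable instance : Module R (TrivialModule ε) := Module.compHom K ε.toRingHom

/-- The tautological identification of the trivial module with the ground field. -/
def equiv : TrivialModule ε ≃+ K := AddEquiv.refl K

lemma equiv_smul (r : R) (c : TrivialModule ε) : equiv ε (r • c) = ε r * equiv ε c := rfl

end TrivialModule

/-- The dimension over `K` of `Ext^n_R(K, K)`, where `K` is an `R`-module via `ε`. -/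
noncomputable def bettiNumber (ε : R →ₐ[K] K) (n : ℕ) : ℕ :=
  Module.finrank K (((Ext K (ModuleCat.{u} R) n).obj
    (Opposite.op (ModuleCat.of R (TrivialModule ε)))).obj (ModuleCat.of R (TrivialModule ε)))

lemma extDim_eq_bettiNumber {R : Type} [Ring R] [Algebra ℂ R] (ε : R →ₐ[ℂ] ℂ) (n : ℕ) :
    extDim R ε n = bettiNumber ε n := rfl

open ModuleCat in
lemma finrank_hom_trivialModule (ε : R →ₐ[K] K) (J : Type u) [Finite J] :
    Module.finrank K (ModuleCat.of R (J →₀ R) ⟶ ModuleCat.of R (TrivialModule ε)) = Nat.card J := by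
  let e : (ModuleCat.of R (J →₀ R) ⟶ ModuleCat.of R (TrivialModule ε)) ≃ₗ[K] (J → K) :=
    { (ModuleCat.homAddEquiv.trans (Finsupp.lift (TrivialModule ε) R J).symm).trans
        (AddEquiv.arrowCongr (.refl J) (TrivialModule.equiv ε)) with
      map_smul' c f := by
        ext j
        exact (TrivialModule.equiv_smul ε (algebraMap K R c) _).trans
          (congrArg (· * _) (ε.commutes c)) }
  have := Fintype.ofFinite J
  rw [e.finrank_eq, Module.finrank_fintype_fun_eq_card, Nat.card_eq_fintype_card]

/-- The augmentation `ε` as a map of modules, on the free module with one basis element. -/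
noncomputable def augmentationMap (ε : R →ₐ[K] K) :
    (PUnit.{u + 1} →₀ R) →ₗ[R] TrivialModule ε :=
  Finsupp.linearCombination R fun _ => (TrivialModule.equiv ε).symm 1

lemma equiv_augmentationMap (ε : R →ₐ[K] K) (a : PUnit →₀ R) :
    TrivialModule.equiv ε (augmentationMap ε a) = ε (a PUnit.unit) := by
  rw [augmentationMap, Finsupp.linearCombination_unique, TrivialModule.equiv_smul,
    AddEquiv.apply_symm_apply, mul_one]

lemma augmentationMap_surjective (ε : R →ₐ[K] K) : Function.Surjective (augmentationMap ε) := by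
  intro c
  refine ⟨Finsupp.single PUnit.unit (algebraMap K R (TrivialModule.equiv ε c)),
    (TrivialModule.equiv ε).injective ?_⟩
  rw [equiv_augmentationMap, Finsupp.single_eq_same, ε.commutes]
  rfl

lemma ker_augmentation_eq_span {I : Type*} {x : I → R} (ε : R →ₐ[K] K) (hε : ∀ i, ε (x i) = 0)
    (hx : Algebra.adjoin K (Set.range x) = ⊤) :
    RingHom.ker ε = Ideal.span (Set.range x) := by
  apply le_antisymm
  · have sub_mem (r : R) : r - algebraMap K R (ε r) ∈ Ideal.span (Set.range x) := by
      induction hx ▸ Algebra.mem_top (R := K) (x := r) using Algebra.adjoin_induction with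
      | mem r hr =>
        obtain ⟨i, rfl⟩ := hr
        simpa [hε i] using Ideal.subset_span (Set.mem_range_self i)
      | algebraMap c => simp
      | add r s _ _ hr hs =>
        rw [map_add, map_add, add_sub_add_comm]
        exact add_mem hr hs
      | mul r s _ _ hr hs =>
        have hrs : r * s - algebraMap K R (ε (r * s)) = r * (s - algebraMap K R (ε s)) +
            algebraMap K R (ε s) * (r - algebraMap K R (ε r)) := by
          rw [map_mul, mul_comm (ε r), map_mul, mul_sub, mul_sub, Algebra.commutes (ε s) r,
            sub_add_sub_cancel]
        rw [hrs]
        exact add_mem (Ideal.mul_mem_left _ r hs) (Ideal.mul_mem_left _ _ hr)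
    intro r hr
    simpa [RingHom.mem_ker.mp hr] using sub_mem r
  · rw [Ideal.span_le]
    rintro _ ⟨i, rfl⟩
    exact hε i

end Augmentation

section SquareZeroComplex

variable {I R : Type u} [Ring R] (x : I → R)

/-- The basis of the degree `n` term of the resolution: one element in degree `0`, and one element
for each generator in positive degrees. -/
abbrev ResolutionIndex (I : Type u) : ℕ → Type u
  | 0 => PUnit
  | _ + 1 => I

namespace ResolutionIndex

/-- The basis element of degree `n` that occurs in the differential of the `i`-th basis element of
degree `n + 1`. -/
def ofGenerator : ∀ n, I → ResolutionIndex I n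
  | 0, _ => PUnit.unit
  | _ + 1, i => i

instance [Finite I] : ∀ n, Finite (ResolutionIndex I n)
  | 0 => inferInstanceAs (Finite PUnit)
  | _ + 1 => inferInstanceAs (Finite I)

end ResolutionIndex

/-- The differential `∑ i, a i • e i ↦ ∑ i, (a i * x i) • e' i` of the resolution, where `e' i` is
the basis element `ResolutionIndex.ofGenerator n i`. -/
noncomputable def squareZeroDifferential (n : ℕ) :
    (ResolutionIndex I (n + 1) →₀ R) →ₗ[R] (ResolutionIndex I n →₀ R) :=
  Finsupp.linearCombination R fun i : I => Finsupp.single (ResolutionIndex.ofGenerator n i) (x i)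

lemma squareZeroDifferential_single (n : ℕ) (i : I) (a : R) :
    squareZeroDifferential x n (Finsupp.single i a) =
      Finsupp.single (ResolutionIndex.ofGenerator n i) (a * x i) := by
  rw [squareZeroDifferential, Finsupp.linearCombination_single, Finsupp.smul_single, smul_eq_mul]

lemma squareZeroDifferential_comp {x : I → R} (hx : ∀ i, x i * x i = 0) (n : ℕ) :
    squareZeroDifferential x n ∘ₗ squareZeroDifferential x (n + 1) = 0 := by
  refine Finsupp.lhom_ext (α := I) fun i a => ?_
  rw [LinearMap.comp_apply, squareZeroDifferential_single, ResolutionIndex.ofGenerator,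
    squareZeroDifferential_single, mul_assoc, hx, mul_zero, Finsupp.single_zero,
    LinearMap.zero_apply]

lemma linearCombination_one_comp_squareZeroDifferential (n : ℕ) :
    Finsupp.linearCombination R (fun _ => (1 : R)) ∘ₗ squareZeroDifferential x n =
      Finsupp.linearCombination R x := by
  refine Finsupp.lhom_ext (α := I) fun i a => ?_
  rw [LinearMap.comp_apply, squareZeroDifferential_single, Finsupp.linearCombination_single,
    Finsupp.linearCombination_single, smul_eq_mul, mul_one, smul_eq_mul]

lemma mem_range_squareZeroDifferential {n : ℕ} {a : I →₀ R}
    (ha : ∀ i, a i ∈ Ideal.span {x i}) :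
    a ∈ LinearMap.range (squareZeroDifferential x (n + 1)) := by
  rw [← a.sum_single]
  refine Submodule.sum_mem _ fun i _ => ?_
  obtain ⟨c, hc⟩ := Ideal.mem_span_singleton'.mp (ha i)
  exact ⟨Finsupp.single i c, by rw [squareZeroDifferential_single, hc]; rfl⟩

lemma squareZeroDifferential_exact {x : I → R} (hx : ∀ i, x i * x i = 0)
    (hrel : ∀ a : I →₀ R, Finsupp.linearCombination R x a = 0 → ∀ i, a i ∈ Ideal.span {x i})
    (n : ℕ) :
    Function.Exact (squareZeroDifferential x (n + 1)) (squareZeroDifferential x n) := by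
  refine LinearMap.exact_iff.mpr (le_antisymm (fun a ha => ?_) ?_)
  · refine mem_range_squareZeroDifferential x (hrel a ?_)
    rw [← linearCombination_one_comp_squareZeroDifferential x n, LinearMap.comp_apply,
      LinearMap.mem_ker.mp ha, map_zero]
  · exact LinearMap.range_le_ker_iff.mpr (squareZeroDifferential_comp hx n)

lemma comp_squareZeroDifferential_eq_zero {M : Type*} [AddCommGroup M] [Module R M]
    (hM : ∀ i (m : M), x i • m = 0) {n : ℕ} (f : (ResolutionIndex I n →₀ R) →ₗ[R] M) :
    f ∘ₗ squareZeroDifferential x n = 0 := by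
  refine Finsupp.lhom_ext (α := I) fun i a => ?_
  rw [LinearMap.comp_apply, squareZeroDifferential_single, ← mul_one (a * x i), ← smul_eq_mul,
    ← Finsupp.smul_single, map_smul, mul_smul, hM, smul_zero, LinearMap.zero_apply]

lemma squareZeroDifferential_zero_apply (a : I →₀ R) :
    squareZeroDifferential x 0 a = Finsupp.single PUnit.unit (Finsupp.linearCombination R x a) := by
  rw [← linearCombination_one_comp_squareZeroDifferential x 0, LinearMap.comp_apply,
    Finsupp.linearCombination_unique, smul_eq_mul, mul_one]
  exact Finsupp.unique_single _

variable {K : Type u} [Field K] [Algebra K R] {ε : R →ₐ[K] K} {x}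

lemma squareZeroDifferential_augmentationMap_exact (hε : ∀ i, ε (x i) = 0)
    (hgen : Algebra.adjoin K (Set.range x) = ⊤) :
    Function.Exact (squareZeroDifferential x 0) (augmentationMap ε) := by
  intro a
  have mem_span_iff : ε (a PUnit.unit) = 0 ↔
      ∃ b, Finsupp.linearCombination R x b = a PUnit.unit := by
    rw [← RingHom.mem_ker, ker_augmentation_eq_span ε hε hgen, Ideal.span,
      ← Finsupp.range_linearCombination, LinearMap.mem_range]
  rw [← (TrivialModule.equiv ε).map_eq_zero_iff, equiv_augmentationMap, mem_span_iff]
  refine exists_congr fun b => ?_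
  rw [squareZeroDifferential_zero_apply]
  conv_rhs => rw [Finsupp.unique_single a]
  exact (Finsupp.single_injective PUnit.unit).eq_iff.symm

end SquareZeroComplex

section TrivialExtension

variable {K R M : Type*} [Field K] [Ring R] [Algebra K R] [AddCommGroup M] [Module K M]
  [Module R M] [IsScalarTower K R M]

/-- The operator `(c, m) ↦ (0, c • e + r • m)`, by which `r` acts on an extension of the trivial
module `K` by `M`. -/
noncomputable def extensionAction (r : R) (e : M) : Module.End K (K × M) :=
  (0 : K × M →ₗ[K] K).prod
    ((LinearMap.toSpanSingleton K M e).coprod (Algebra.lsmul K K M r))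

@[simp]
lemma extensionAction_apply (r : R) (e : M) (v : K × M) :
    extensionAction r e v = (0, v.1 • e + r • v.2) := rfl

lemma extensionAction_mul_self {r : R} {e : M} (hr : r * r = 0) (he : r • e = 0) :
    (extensionAction r e * extensionAction r e : Module.End K (K × M)) = 0 := by
  refine LinearMap.ext fun v => ?_
  simp [smul_comm r v.1 e, he, smul_smul, hr]

lemma algHom_apply_zero_mk {I : Type*} {x : I → R} (hgen : Algebra.adjoin K (Set.range x) = ⊤)
    {e : I → M} {φ : R →ₐ[K] Module.End K (K × M)}
    (hφ : ∀ i, φ (x i) = extensionAction (x i) (e i)) (r : R) (m : M) :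
    φ r (0, m) = (0, r • m) := by
  induction hgen ▸ Algebra.mem_top (R := K) (x := r) using Algebra.adjoin_induction
    generalizing m with
  | mem r hr =>
    obtain ⟨i, rfl⟩ := hr
    simp [hφ]
  | algebraMap c => simp
  | add r s _ _ hr hs => simp [hr, hs, add_smul]
  | mul r s _ _ hr hs => simp [hr, hs, mul_smul]

end TrivialExtension

/-- The algebra `R` is the free product of the algebras of dual numbers `K[x i] / (x i)²`. The lifts
in `exists_algHom` are unique by `adjoin_range_eq_top`. -/
structure IsFreeOnSquareZero (K : Type u) {I R : Type u} [Field K] [Ring R] [Algebra K R]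
    (x : I → R) : Prop where
  sq_eq_zero (i : I) : x i * x i = 0
  adjoin_range_eq_top : Algebra.adjoin K (Set.range x) = ⊤
  exists_algHom {A : Type u} [Ring A] [Algebra K A] (f : I → A) (hf : ∀ i, f i * f i = 0) :
    ∃ φ : R →ₐ[K] A, ∀ i, φ (x i) = f i

namespace IsFreeOnSquareZero

variable {K I R : Type u} [Field K] [Ring R] [Algebra K R] {x : I → R}

lemma exists_linearMap_mul_eq_smul (h : IsFreeOnSquareZero K x) {M : Type u} [AddCommGroup M]
    [Module K M] [Module R M] [IsScalarTower K R M] {e : I → M} (he : ∀ i, x i • e i = 0) :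
    ∃ δ : R →ₗ[K] M, ∀ a i, δ (a * x i) = a • e i := by
  obtain ⟨φ, hφ⟩ := h.exists_algHom (fun i => extensionAction (K := K) (x i) (e i))
    fun i => extensionAction_mul_self (h.sq_eq_zero i) (he i)
  refine ⟨LinearMap.snd K K M ∘ₗ LinearMap.applyₗ (1, 0) ∘ₗ φ.toLinearMap, fun a i => ?_⟩
  simp [hφ, algHom_apply_zero_mk h.adjoin_range_eq_top hφ]

lemma mem_span_of_linearCombination_eq_zero (h : IsFreeOnSquareZero K x) (a : I →₀ R)
    (ha : Finsupp.linearCombination R x a = 0) (i : I) : a i ∈ Ideal.span {x i} := by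
  classical
  let e : I → R ⧸ Ideal.span {x i} := Pi.single i (Submodule.Quotient.mk 1)
  have he (j : I) : x j • e j = 0 := by
    rcases eq_or_ne j i with rfl | hj
    · simp only [e, Pi.single_eq_same]
      rw [← Submodule.Quotient.mk_smul, Submodule.Quotient.mk_eq_zero, smul_eq_mul, mul_one]
      exact Ideal.mem_span_singleton_self _
    · simp [e, hj]
  obtain ⟨δ, hδ⟩ := h.exists_linearMap_mul_eq_smul he
  have hsum : Finsupp.linearCombination R e a = 0 := by
    rw [← δ.map_zero, ← ha, Finsupp.linearCombination_apply, Finsupp.linearCombination_apply,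
      Finsupp.sum, Finsupp.sum, map_sum]
    exact Finset.sum_congr rfl fun j _ => (hδ (a j) j).symm
  rw [← Submodule.Quotient.mk_eq_zero, ← hsum, Finsupp.linearCombination_apply,
    Finsupp.sum_eq_single i (fun j _ hj => by simp [e, hj]) (fun _ => zero_smul _ _)]
  simp only [e, Pi.single_eq_same]
  rw [← Submodule.Quotient.mk_smul, smul_eq_mul, mul_one]

/-- The free resolution `⋯ → R^I → R^I → R → K` of the trivial module. -/
noncomputable def resolution (h : IsFreeOnSquareZero K x) {ε : R →ₐ[K] K}
    (hε : ∀ i, ε (x i) = 0) : ProjectiveResolution (ModuleCat.of R (TrivialModule ε)) :=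
  projectiveResolutionOfExact (F := fun n => ResolutionIndex I n →₀ R) (squareZeroDifferential x)
    (augmentationMap ε)
    (squareZeroDifferential_exact h.sq_eq_zero h.mem_span_of_linearCombination_eq_zero)
    (squareZeroDifferential_augmentationMap_exact hε h.adjoin_range_eq_top)
    (augmentationMap_surjective ε)

lemma resolution_d_comp_eq_zero (h : IsFreeOnSquareZero K x) {ε : R →ₐ[K] K}
    (hε : ∀ i, ε (x i) = 0) (n : ℕ)
    (f : (h.resolution hε).complex.X n ⟶ ModuleCat.of R (TrivialModule ε)) :
    (h.resolution hε).complex.d (n + 1) n ≫ f = 0 := by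
  have smul_eq_zero (i : I) (c : TrivialModule ε) : x i • c = 0 := by
    rw [← (TrivialModule.equiv ε).map_eq_zero_iff, TrivialModule.equiv_smul, hε, zero_mul]
  exact (moduleComplex_d_comp_ofHom (F := fun n => ResolutionIndex I n →₀ R)
    (squareZeroDifferential x) (squareZeroDifferential_comp h.sq_eq_zero) f.hom).trans
    (congrArg ModuleCat.ofHom (comp_squareZeroDifferential_eq_zero x smul_eq_zero (n := n) f.hom))

lemma bettiNumber_eq_card_resolutionIndex [Finite I] (h : IsFreeOnSquareZero K x) {ε : R →ₐ[K] K}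
    (hε : ∀ i, ε (x i) = 0) (n : ℕ) : bettiNumber ε n = Nat.card (ResolutionIndex I n) :=
  (extIsoHomOfMinimal (h.resolution hε) (h.resolution_d_comp_eq_zero hε)
    n).toLinearEquiv.finrank_eq.trans (finrank_hom_trivialModule ε (ResolutionIndex I n))

end IsFreeOnSquareZero

lemma mk_mul_one_sub_X {A : Type*} [Ring A] {a : ℕ → A} {c : A} (ha : ∀ n, a (n + 1) = c) :
    PowerSeries.mk a * (1 - PowerSeries.X) =
      PowerSeries.C (a 0) + PowerSeries.C (c - a 0) * PowerSeries.X := by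
  ext n
  rw [mul_sub, mul_one, map_sub, map_add]
  rcases n with _ | _ | n <;>
    simp [PowerSeries.coeff_succ_mul_X, PowerSeries.coeff_C, ha]

theorem betti_numbers_general {K I R : Type u} [Field K] [Finite I] [Ring R] [Algebra K R]
    {x : I → R} (hx : IsFreeOnSquareZero K x) (ε : R →ₐ[K] K) (hε : ∀ i, ε (x i) = 0) :
    (bettiNumber ε 0 = 1 ∧ ∀ n ≥ 1, bettiNumber ε n = Nat.card I) ∧
    (PowerSeries.mk fun n => (bettiNumber ε n : ℚ)) * (1 - PowerSeries.X) =
      1 + PowerSeries.C (Nat.card I - 1 : ℚ) * PowerSeries.X := by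
  have h_zero : bettiNumber ε 0 = 1 :=
    (hx.bettiNumber_eq_card_resolutionIndex hε 0).trans Nat.card_unique
  have h_succ (n : ℕ) : bettiNumber ε (n + 1) = Nat.card I :=
    hx.bettiNumber_eq_card_resolutionIndex hε (n + 1)
  refine ⟨⟨h_zero, fun n hn => ?_⟩, ?_⟩
  · rw [← Nat.sub_add_cancel hn, h_succ]
  · rw [mk_mul_one_sub_X (c := (Nat.card I : ℚ)) fun n => by rw [h_succ], h_zero, Nat.cast_one,
      map_one]

lemma adjoin_range_mkAlgHom_ι {S X : Type*} [CommRing S]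
    (r : FreeAlgebra S X → FreeAlgebra S X → Prop) :
    Algebra.adjoin S (Set.range fun i => RingQuot.mkAlgHom S r (ι S i)) = ⊤ := by
  rw [Set.range_comp' (RingQuot.mkAlgHom S r), ← AlgHom.map_adjoin, FreeAlgebra.adjoin_range_ι,
    Algebra.map_top, AlgHom.range_eq_top]
  exact RingQuot.mkAlgHom_surjective S r

namespace CRel

/-- The generators `e2` and `e3` of the algebra, indexed by `0` and `1`. -/
noncomputable def squareZeroGenerator (i : Fin 2) : RingQuot CRel :=
  RingQuot.mkAlgHom ℂ CRel (ι ℂ i.succ)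

lemma mk_zero_eq_commutator : RingQuot.mkAlgHom ℂ CRel (ι ℂ 0) =
    squareZeroGenerator 0 * squareZeroGenerator 1 -
      squareZeroGenerator 1 * squareZeroGenerator 0 := by
  simpa only [map_sub, map_mul] using! (RingQuot.mkAlgHom_rel ℂ CRel.r23).symm

lemma squareZeroGenerator_mul_self (i : Fin 2) :
    squareZeroGenerator i * squareZeroGenerator i = 0 := by
  rw [squareZeroGenerator, ← map_mul, ← map_zero (RingQuot.mkAlgHom ℂ CRel)]
  fin_cases i
  exacts [RingQuot.mkAlgHom_rel ℂ CRel.r22, RingQuot.mkAlgHom_rel ℂ CRel.r33]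

lemma adjoin_range_squareZeroGenerator :
    Algebra.adjoin ℂ (Set.range squareZeroGenerator) = ⊤ := by
  rw [eq_top_iff, ← adjoin_range_mkAlgHom_ι CRel]
  refine Algebra.adjoin_le ?_
  have mem_adjoin (i : Fin 2) :
      squareZeroGenerator i ∈ Algebra.adjoin ℂ (Set.range squareZeroGenerator) :=
    Algebra.subset_adjoin (Set.mem_range_self i)
  rintro _ ⟨i, rfl⟩
  cases i using Fin.cases with
  | zero =>
    simp only [mk_zero_eq_commutator]
    exact sub_mem (mul_mem (mem_adjoin 0) (mem_adjoin 1)) (mul_mem (mem_adjoin 1) (mem_adjoin 0))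
  | succ i => exact mem_adjoin i

lemma exists_algHom_squareZeroGenerator {A : Type*} [Ring A] [Algebra ℂ A] (f : Fin 2 → A)
    (hf : ∀ i, f i * f i = 0) :
    ∃ φ : RingQuot CRel →ₐ[ℂ] A, ∀ i, φ (squareZeroGenerator i) = f i := by
  let g : FreeAlgebra ℂ (Fin 3) →ₐ[ℂ] A :=
    FreeAlgebra.lift ℂ (Fin.cons (f 0 * f 1 - f 1 * f 0) f : Fin 3 → A)
  have g_zero : g (ι ℂ 0) = f 0 * f 1 - f 1 * f 0 := FreeAlgebra.lift_ι_apply _ _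
  have g_one : g (ι ℂ 1) = f 0 := FreeAlgebra.lift_ι_apply _ _
  have g_two : g (ι ℂ 2) = f 1 := FreeAlgebra.lift_ι_apply _ _
  -- The commutator `[a, b]` anticommutes with `a` and `b` because `a²` and `b²` vanish.
  have anticomm_left (a b : A) :
      (a * b - b * a) * a + a * (a * b - b * a) = a * a * b - b * (a * a) := by noncomm_ring
  have anticomm_right (a b : A) :
      (a * b - b * a) * b + b * (a * b - b * a) = a * (b * b) - b * b * a := by noncomm_ring
  have g_rel ⦃a b⦄ (hab : CRel a b) : g a = g b := by
    cases hab <;> simp [g_zero, g_one, g_two, hf, anticomm_left, anticomm_right]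
  refine ⟨RingQuot.liftAlgHom ℂ ⟨g, g_rel⟩, fun i => ?_⟩
  rw [squareZeroGenerator, RingQuot.liftAlgHom_mkAlgHom_apply]
  exact FreeAlgebra.lift_ι_apply _ _

lemma isFreeOnSquareZero_squareZeroGenerator : IsFreeOnSquareZero ℂ squareZeroGenerator where
  sq_eq_zero := squareZeroGenerator_mul_self
  adjoin_range_eq_top := adjoin_range_squareZeroGenerator
  exists_algHom := exists_algHom_squareZeroGenerator

end CRel

theorem betti_numbers (ε : RingQuot CRel →ₐ[ℂ] ℂ)
    (hε : ∀ i : Fin 3, ε (RingQuot.mkAlgHom ℂ CRel (ι ℂ i)) = 0) :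
    (extDim (RingQuot CRel) ε 0 = 1 ∧ ∀ n ≥ 1, extDim (RingQuot CRel) ε n = 2) ∧
    (PowerSeries.mk fun n => (extDim (RingQuot CRel) ε n : ℚ)) * (1 - PowerSeries.X) =
      1 + PowerSeries.X := by
  have h := betti_numbers_general CRel.isFreeOnSquareZero_squareZeroGenerator ε fun i => hε i.succ
  simpa [extDim_eq_bettiNumber, show (2 : ℚ) - 1 = 1 by norm_num] using h
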